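/- arXiv:1407.0574 — 2 statements merged into one kernel-verified Lean document; each statement's English description precedes it below -/
import Mathlib

section
/- Let ε ∈ {0,1}, n ∈ ℕ, and set ν = ε + 2n. For every complex number z with Re(z) > 1, the integral ∫_{-∞}^{∞} (i - u)^ν · (1+u²)^{-(z+ν)/2} du converges and equals i^ε · ( ∏_{j=0}^{n-1} (2 - z + ε + 2j) ) / ( ∏_{j=0}^{n-1} (z + ε + 2j) ) · √π · Γ((z+ε-1)/2) / Γ((z+ε)/2). (Here the hypothesis Re(z) > 1 guarantees that all factors z+ε+2j and the Gamma value Γ((z+ε)/2) are nonzero; the empty product is 1.) -/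
open MeasureTheory

/-!
Fix `z` and write `J ν` for the integral of weight `ν`. Since `1 + u² = (i - u)(-i - u)`, the
derivative of `(i - u) ^ (ν + 1) * (1 + u²) ^ (-(z + ν) / 2)` is a linear combination of the
integrands of `J ν` and `J (ν + 2)`. It integrates to zero, which gives
`(z + ν) J (ν + 2) = (2 - z + ν) J ν`. This reduces the weight to `0` or `1`; in weight `1` the
part of the integrand that is odd in `u` drops out, which leaves `i ∫ (1 + u²) ^ (-s)`. That
integral is evaluated by writing `Γ(s) (1 + u²) ^ (-s)` as a Gamma integral in `t` and integrating
the resulting Gaussian in `u` first.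
-/

open Filter Module Set Topology
open scoped Real

section OneAddNormSq

variable {V : Type*} [NormedAddCommGroup V]

/-- The integrand `t ^ (s - 1) * e ^ (-(1 + ‖v‖²) t)` of the double integral that evaluates
`∫ (1 + ‖v‖²) ^ (-s)`: a Gamma integrand in `t > 0` and a Gaussian in `v`. -/
noncomputable def gammaGaussian (s : ℂ) (v : V) (t : ℝ) : ℂ :=
  (t : ℂ) ^ (s - 1) * Complex.exp (-((1 + ‖v‖ ^ 2 : ℝ) * t))

lemma norm_gammaGaussian (s : ℂ) (v : V) {t : ℝ} (ht : 0 < t) :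
    ‖gammaGaussian s v t‖ = t ^ (s.re - 1) * Real.exp (-((1 + ‖v‖ ^ 2) * t)) := by
  rw [gammaGaussian, norm_mul, Complex.norm_cpow_eq_rpow_re_of_pos ht, Complex.norm_exp]
  norm_cast

lemma setIntegral_gammaGaussian {s : ℂ} (hs : 0 < s.re) (v : V) :
    ∫ t in Ioi (0 : ℝ), gammaGaussian s v t =
      ((1 + ‖v‖ ^ 2 : ℝ) : ℂ) ^ (-s) * Complex.Gamma s := by
  have hv : 0 < 1 + ‖v‖ ^ 2 := by positivity
  simp only [gammaGaussian]
  rw [Complex.integral_cpow_mul_exp_neg_mul_Ioi hs hv, one_div,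
    Complex.inv_cpow_ofReal_nonneg hv.le, Complex.cpow_neg]

lemma setIntegral_norm_gammaGaussian {s : ℂ} (hs : 0 < s.re) (v : V) :
    ∫ t in Ioi (0 : ℝ), ‖gammaGaussian s v t‖ =
      (1 + ‖v‖ ^ 2) ^ (-s.re) * Real.Gamma s.re := by
  have hv : 0 < 1 + ‖v‖ ^ 2 := by positivity
  rw [setIntegral_congr_fun measurableSet_Ioi fun t ht ↦ norm_gammaGaussian s v ht,
    Real.integral_rpow_mul_exp_neg_mul_Ioi hs hv, one_div, Real.inv_rpow hv.le,
    Real.rpow_neg hv.le]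

lemma integrableOn_gammaGaussian {s : ℂ} (hs : 0 < s.re) (v : V) :
    IntegrableOn (gammaGaussian s v) (Ioi 0) := by
  have hmeas : Measurable (gammaGaussian s v) := by unfold gammaGaussian; fun_prop
  have hbound := integrableOn_rpow_mul_exp_neg_mul_rpow (s := s.re - 1) (by linarith)
    one_pos (show 0 < 1 + ‖v‖ ^ 2 by positivity)
  refine hbound.mono' hmeas.aestronglyMeasurable ?_
  filter_upwards [ae_restrict_mem measurableSet_Ioi] with t ht
  rw [norm_gammaGaussian s v ht, Real.rpow_one, neg_mul]

variable [MeasurableSpace V] [BorelSpace V]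

lemma measurable_uncurry_gammaGaussian (s : ℂ) :
    Measurable (Function.uncurry (gammaGaussian (V := V) s)) := by
  unfold gammaGaussian Function.uncurry
  fun_prop

variable [InnerProductSpace ℝ V] [FiniteDimensional ℝ V]

lemma integrable_uncurry_gammaGaussian {s : ℂ} (hs : (finrank ℝ V : ℝ) / 2 < s.re) :
    Integrable (Function.uncurry (gammaGaussian (V := V) s))
      (volume.prod (volume.restrict (Ioi 0))) := by
  have hs₀ : 0 < s.re := lt_of_le_of_lt (by positivity) hs
  rw [integrable_prod_iff (measurable_uncurry_gammaGaussian s).aestronglyMeasurable]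
  refine ⟨.of_forall (integrableOn_gammaGaussian hs₀), ?_⟩
  simp only [Function.uncurry_apply_pair, setIntegral_norm_gammaGaussian hs₀]
  have hjapanese := integrable_rpow_neg_one_add_norm_sq (E := V) (μ := volume) (r := 2 * s.re)
    (by linarith)
  simpa only [← mul_neg, mul_div_cancel_left₀ _ (two_ne_zero' ℝ)] using
    hjapanese.mul_const (Real.Gamma s.re)

lemma integral_gammaGaussian (s : ℂ) {t : ℝ} (ht : 0 < t) :
    ∫ v : V, gammaGaussian s v t =
      (π : ℂ) ^ (finrank ℝ V / 2 : ℂ) *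
        ((Real.exp (-t) : ℂ) * (t : ℂ) ^ (s - finrank ℝ V / 2 - 1)) := by
  have hsplit (v : V) : gammaGaussian s v t =
      (t : ℂ) ^ (s - 1) * Complex.exp (-t) * Complex.exp (-t * ‖v‖ ^ 2) := by
    rw [gammaGaussian, mul_assoc, ← Complex.exp_add]
    push_cast
    ring_nf
  have hexponent : s - finrank ℝ V / 2 - 1 = s - 1 - finrank ℝ V / 2 := by ring
  simp only [hsplit]
  rw [integral_const_mul, GaussianFourier.integral_cexp_neg_mul_sq_norm (by simpa using ht),
    Complex.div_cpow_ofReal_nonneg Real.pi_pos.le ht.le, hexponent,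
    Complex.cpow_sub (s - 1) _ (by exact_mod_cast ht.ne'), Complex.ofReal_exp,
    Complex.ofReal_neg]
  ring

theorem integral_one_add_norm_sq_cpow_neg {s : ℂ} (hs : (finrank ℝ V : ℝ) / 2 < s.re) :
    ∫ v : V, ((1 + ‖v‖ ^ 2 : ℝ) : ℂ) ^ (-s) =
      (π : ℂ) ^ (finrank ℝ V / 2 : ℂ) * Complex.Gamma (s - finrank ℝ V / 2) /
        Complex.Gamma s := by
  have hs₀ : 0 < s.re := lt_of_le_of_lt (by positivity) hs
  have hs_sub : 0 < (s - finrank ℝ V / 2).re := by simpa using hs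
  rw [eq_div_iff (Complex.Gamma_ne_zero_of_re_pos hs₀)]
  calc (∫ v : V, ((1 + ‖v‖ ^ 2 : ℝ) : ℂ) ^ (-s)) * Complex.Gamma s
      = ∫ v : V, ∫ t in Ioi (0 : ℝ), gammaGaussian s v t := by
        simp only [setIntegral_gammaGaussian hs₀, integral_mul_const]
    _ = ∫ t in Ioi (0 : ℝ), ∫ v : V, gammaGaussian s v t :=
        integral_integral_swap (integrable_uncurry_gammaGaussian hs)
    _ = ∫ t in Ioi (0 : ℝ), (π : ℂ) ^ (finrank ℝ V / 2 : ℂ) *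
          ((Real.exp (-t) : ℂ) * (t : ℂ) ^ (s - finrank ℝ V / 2 - 1)) :=
        setIntegral_congr_fun measurableSet_Ioi fun t ht ↦ integral_gammaGaussian s ht
    _ = (π : ℂ) ^ (finrank ℝ V / 2 : ℂ) * Complex.Gamma (s - finrank ℝ V / 2) := by
        rw [integral_const_mul, Complex.Gamma_eq_integral hs_sub, Complex.GammaIntegral]

end OneAddNormSq

/-- The function `(i - u) ^ ν * (1 + u²) ^ (-s)` on the real line. For `s = (z + ν) / 2` it is
`u ↦ Φ^χ_ν(w · n(u))`, the weight-`ν` vector of the principal series on the big Bruhat cell. The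
exponent `s` is kept independent of `ν` because integration by parts relates `(ν, s)` to
`(ν + 2, s + 1)`. -/
noncomputable def weightKernel (ν : ℤ) (s : ℂ) (u : ℝ) : ℂ :=
  (Complex.I - u) ^ ν * ((1 + u ^ 2 : ℝ) : ℂ) ^ (-s)

section WeightKernel

variable {ν : ℤ} {s : ℂ}

lemma normSq_I_sub_ofReal (u : ℝ) : Complex.normSq (Complex.I - u) = 1 + u ^ 2 := by
  simp only [Complex.normSq_apply, Complex.sub_re, Complex.sub_im, Complex.I_re, Complex.I_im,
    Complex.ofReal_re, Complex.ofReal_im]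
  ring

lemma I_sub_ofReal_ne_zero (u : ℝ) : Complex.I - u ≠ 0 := by
  rw [← Complex.normSq_pos, normSq_I_sub_ofReal]
  positivity

lemma norm_weightKernel (ν : ℤ) (s : ℂ) (u : ℝ) :
    ‖weightKernel ν s u‖ = (1 + u ^ 2) ^ (ν / 2 - s.re) := by
  have hu : 0 < 1 + u ^ 2 := by positivity
  rw [weightKernel, norm_mul, norm_zpow, Complex.norm_def, normSq_I_sub_ofReal,
    Complex.norm_cpow_eq_rpow_re_of_pos hu, Real.sqrt_eq_rpow, ← Real.rpow_intCast,
    ← Real.rpow_mul hu.le, ← Real.rpow_add hu,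
    Complex.neg_re, one_div_mul_eq_div, sub_eq_add_neg]

lemma integrable_weightKernel (h : ν + 1 < 2 * s.re) : Integrable (weightKernel ν s) := by
  have hjapanese := integrable_rpow_neg_one_add_norm_sq (E := ℝ) (μ := volume)
    (r := 2 * s.re - ν) (by rw [finrank_self]; push_cast; linarith)
  have hmeas : Measurable (weightKernel ν s) := by unfold weightKernel; fun_prop
  refine hjapanese.mono' hmeas.aestronglyMeasurable (.of_forall fun u ↦ le_of_eq ?_)
  rw [norm_weightKernel, Real.norm_eq_abs, sq_abs]
  ring_nf

lemma tendsto_weightKernel_cobounded (h : ν < 2 * s.re) :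
    Tendsto (weightKernel ν s) (Bornology.cobounded ℝ) (𝓝 0) := by
  have hsq : Tendsto (fun u : ℝ ↦ 1 + u ^ 2) (Bornology.cobounded ℝ) atTop := by
    simpa only [Function.comp_def, Real.norm_eq_abs, sq_abs] using
      tendsto_atTop_add_const_left _ 1
        ((tendsto_pow_atTop two_ne_zero).comp (tendsto_norm_cobounded_atTop (E := ℝ)))
  rw [tendsto_zero_iff_norm_tendsto_zero]
  simp only [norm_weightKernel]
  simpa only [Function.comp_def, neg_sub] using
    (tendsto_rpow_neg_atTop (y := s.re - ν / 2) (by linarith)).comp hsq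

lemma hasDerivAt_I_sub_ofReal_zpow (ν : ℤ) (u : ℝ) :
    HasDerivAt (fun x : ℝ ↦ (Complex.I - x) ^ ν) (-(ν * (Complex.I - u) ^ (ν - 1))) u := by
  have h := (hasDerivAt_zpow ν _ (.inl (I_sub_ofReal_ne_zero u))).comp u
    (Complex.ofRealCLM.hasDerivAt.const_sub Complex.I)
  simpa [Function.comp_def] using h

lemma hasDerivAt_one_add_sq_cpow (w : ℂ) (u : ℝ) :
    HasDerivAt (fun x : ℝ ↦ ((1 + x ^ 2 : ℝ) : ℂ) ^ w)
      (w * ((1 + u ^ 2 : ℝ) : ℂ) ^ (w - 1) * (2 * u)) u := by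
  have hslit : ((1 + u ^ 2 : ℝ) : ℂ) ∈ Complex.slitPlane :=
    Complex.ofReal_mem_slitPlane.mpr (by positivity)
  have hbase : HasDerivAt (fun x : ℝ ↦ ((1 + x ^ 2 : ℝ) : ℂ)) (2 * u) u := by
    simpa using (((hasDerivAt_id u).pow 2).const_add 1).ofReal_comp
  exact (Complex.hasStrictDerivAt_cpow_const hslit).hasDerivAt.comp u hbase

lemma hasDerivAt_weightKernel_add_one (ν : ℤ) (s : ℂ) (u : ℝ) :
    HasDerivAt (weightKernel (ν + 1) s)
      (s * weightKernel (ν + 2) (s + 1) u - (ν + 1 - s) * weightKernel ν s u) u := by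
  have hI := I_sub_ofReal_ne_zero u
  have hu : ((1 + u ^ 2 : ℝ) : ℂ) ≠ 0 := by exact_mod_cast (by positivity : 1 + u ^ 2 ≠ 0)
  have hfactor : ((1 + u ^ 2 : ℝ) : ℂ) = (Complex.I - u) * (-Complex.I - u) := by
    push_cast
    linear_combination Complex.I_sq
  have hcpow : ((1 + u ^ 2 : ℝ) : ℂ) ^ (-s) =
      ((1 + u ^ 2 : ℝ) : ℂ) ^ (-s - 1) * ((1 + u ^ 2 : ℝ) : ℂ) := by
    rw [Complex.cpow_sub _ _ hu, Complex.cpow_one, div_mul_cancel₀ _ hu]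
  refine ((hasDerivAt_I_sub_ofReal_zpow (ν + 1) u).mul
    (hasDerivAt_one_add_sq_cpow (-s) u)).congr_deriv ?_
  simp only [weightKernel, neg_add', Int.cast_add, Int.cast_one]
  rw [hcpow, add_sub_cancel_right, zpow_add_one₀ hI, zpow_add₀ hI ν 2, zpow_ofNat]
  linear_combination
    (-s * (Complex.I - u) ^ ν * ((1 + u ^ 2 : ℝ) : ℂ) ^ (-s - 1)) * hfactor

lemma mul_integral_weightKernel_add_two (h : ν + 1 < 2 * s.re) :
    s * ∫ u, weightKernel (ν + 2) (s + 1) u = (ν + 1 - s) * ∫ u, weightKernel ν s u := by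
  have hint := (integrable_weightKernel h).const_mul (ν + 1 - s)
  have hint_add_two := (integrable_weightKernel (ν := ν + 2) (s := s + 1)
    (by push_cast; rw [Complex.add_re, Complex.one_re]; linarith)).const_mul s
  have hlim := tendsto_weightKernel_cobounded (ν := ν + 1) (s := s) (by exact_mod_cast h)
  have hboundary := integral_of_hasDerivAt_of_tendsto (hasDerivAt_weightKernel_add_one ν s)
    (hint_add_two.sub hint)
    (hlim.mono_left IsOrderBornology.atBot_le_cobounded)
    (hlim.mono_left IsOrderBornology.atTop_le_cobounded)
  rw [integral_sub hint_add_two hint, integral_const_mul, integral_const_mul, sub_zero] at hboundary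
  exact sub_eq_zero.mp hboundary

lemma integral_weightKernel_zero (hs : 1 < 2 * s.re) :
    ∫ u, weightKernel 0 s u = √π * Complex.Gamma (s - 1 / 2) / Complex.Gamma s := by
  have h := integral_one_add_norm_sq_cpow_neg (V := ℝ) (s := s) (by
    rw [finrank_self]; push_cast; linarith)
  have hsqrt : (√π : ℂ) = (π : ℂ) ^ (1 / 2 : ℂ) := by
    rw [Real.sqrt_eq_rpow, Complex.ofReal_cpow Real.pi_pos.le]
    push_cast
    rfl
  rw [hsqrt]
  simpa [weightKernel] using h

lemma integral_weightKernel_one (hs : 1 < s.re) :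
    ∫ u, weightKernel 1 s u = Complex.I * ∫ u, weightKernel 0 s u := by
  have hint : Integrable (weightKernel 1 s) := integrable_weightKernel (by push_cast; linarith)
  have hsymm (u : ℝ) : weightKernel 1 s u + weightKernel 1 s (-u) =
      2 * Complex.I * weightKernel 0 s u := by
    simp only [weightKernel, zpow_one, zpow_zero, neg_sq, Complex.ofReal_neg]
    ring
  have hdouble := integral_add hint hint.comp_neg
  simp only [hsymm] at hdouble
  rw [integral_const_mul, integral_neg_eq_self] at hdouble
  linear_combination (-1 / 2) * hdouble

end WeightKernel

section PrincipalSeries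

variable {z : ℂ}

lemma two_mul_re_add_intCast_div_two (z : ℂ) (ν : ℤ) :
    2 * ((z + ν) / 2).re = z.re + ν := by
  rw [Complex.div_ofNat_re, Complex.add_re, Complex.intCast_re]
  ring

lemma integrable_weightKernel_add_div_two (hz : 1 < z.re) (ν : ℤ) :
    Integrable (weightKernel ν ((z + ν) / 2)) :=
  integrable_weightKernel (by rw [two_mul_re_add_intCast_div_two]; linarith)

lemma integral_weightKernel_add_two (hz : 1 < z.re) {ν : ℤ} (hν : z + ν ≠ 0) :
    ∫ u, weightKernel (ν + 2) ((z + (ν + 2 : ℤ)) / 2) u =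
      (2 - z + ν) / (z + ν) * ∫ u, weightKernel ν ((z + ν) / 2) u := by
  have hrec := mul_integral_weightKernel_add_two (ν := ν) (s := (z + ν) / 2)
    (by rw [two_mul_re_add_intCast_div_two]; linarith)
  have hexponent : (z + (ν + 2 : ℤ)) / 2 = (z + ν) / 2 + 1 := by push_cast; ring
  rw [hexponent, div_mul_eq_mul_div, eq_div_iff hν]
  linear_combination 2 * hrec

theorem integral_weightKernel_add_two_mul (hz : 1 < z.re) (ν : ℤ) (n : ℕ)
    (hν : ∀ j < n, z + ν + 2 * j ≠ 0) :
    ∫ u, weightKernel (ν + 2 * n) ((z + (ν + 2 * n : ℤ)) / 2) u =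
      (∏ j ∈ Finset.range n, (2 - z + ν + 2 * j)) / (∏ j ∈ Finset.range n, (z + ν + 2 * j)) *
        ∫ u, weightKernel ν ((z + ν) / 2) u := by
  induction n with
  | zero => simp
  | succ n ih =>
    have hlast : z + (ν + 2 * n : ℤ) ≠ 0 := by
      push_cast
      rw [← add_assoc]
      exact hν n n.lt_succ_self
    have hweight : ν + 2 * ((n + 1 : ℕ) : ℤ) = ν + 2 * n + 2 := by push_cast; ring
    rw [hweight, integral_weightKernel_add_two hz hlast,
      ih fun j hj ↦ hν j (hj.trans n.lt_succ_self), Finset.prod_range_succ,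
      Finset.prod_range_succ, mul_div_mul_comm]
    push_cast
    ring

lemma integral_weightKernel_of_le_one (hz : 1 < z.re) {ε : ℕ} (hε : ε ≤ 1) :
    ∫ u, weightKernel ε ((z + ε) / 2) u =
      Complex.I ^ ε * (√π * Complex.Gamma ((z + ε - 1) / 2) / Complex.Gamma ((z + ε) / 2)) := by
  have hre := two_mul_re_add_intCast_div_two z ε
  have hreduce : ∫ u, weightKernel ε ((z + ε) / 2) u =
      Complex.I ^ ε * ∫ u, weightKernel 0 ((z + ε) / 2) u := by
    interval_cases ε
    · simp
    · rw [pow_one]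
      exact integral_weightKernel_one (by push_cast at hre ⊢; linarith)
  rw [hreduce, integral_weightKernel_zero (by push_cast at hre; linarith [ε.cast_nonneg (α := ℝ)]),
    sub_div]

end PrincipalSeries

/-- The closed formula for the standard intertwining operator on the K-type of weight
`ν = ε + 2n`: for `Re z > 1`,
`∫_ℝ (i-u)^ν (1+u²)^{-(z+ν)/2} du
  = i^ε · (∏_{j<n} (2-z+ε+2j)) / (∏_{j<n} (z+ε+2j)) · √π · Γ((z+ε-1)/2)/Γ((z+ε)/2)`. -/
theorem stmt_2 (ε : ℕ) (hε : ε ≤ 1) (n : ℕ) (z : ℂ) (hz : 1 < z.re) :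
    Integrable (fun u : ℝ => (Complex.I - (u : ℂ)) ^ (ε + 2 * n) *
      ((1 + u ^ 2 : ℝ) : ℂ) ^ (-(z + ((ε + 2 * n : ℕ) : ℂ)) / 2)) ∧
    ∫ u : ℝ, (Complex.I - (u : ℂ)) ^ (ε + 2 * n) *
        ((1 + u ^ 2 : ℝ) : ℂ) ^ (-(z + ((ε + 2 * n : ℕ) : ℂ)) / 2) =
      Complex.I ^ ε *
        ((∏ j ∈ Finset.range n, (2 - z + (ε : ℂ) + 2 * (j : ℂ))) /
          (∏ j ∈ Finset.range n, (z + (ε : ℂ) + 2 * (j : ℂ)))) *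
        (Real.sqrt Real.pi : ℂ) * Complex.Gamma ((z + (ε : ℂ) - 1) / 2) /
        Complex.Gamma ((z + (ε : ℂ)) / 2) := by
  have hkernel (u : ℝ) : (Complex.I - (u : ℂ)) ^ (ε + 2 * n) *
      ((1 + u ^ 2 : ℝ) : ℂ) ^ (-(z + ((ε + 2 * n : ℕ) : ℂ)) / 2) =
      weightKernel (ε + 2 * n) ((z + (ε + 2 * n : ℤ)) / 2) u := by
    rw [weightKernel, neg_div]
    norm_cast
  have hne (j : ℕ) : z + ε + 2 * j ≠ 0 := by
    have hre : (z + ε + 2 * j).re = z.re + ε + 2 * j := by simp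
    exact Complex.ne_zero_of_re_pos (hre ▸ by positivity)
  simp only [hkernel]
  refine ⟨integrable_weightKernel_add_div_two hz _, ?_⟩
  rw [integral_weightKernel_add_two_mul hz ε n fun j _ ↦ mod_cast hne j]
  simp only [Int.cast_natCast]
  rw [integral_weightKernel_of_le_one hz hε]
  ring
end

section
/- Let A = ℤ[x₁₁, x₁₂, x₂₁, x₂₂], let D = x₁₁x₂₂ - x₁₂x₂₁, and let R be the localization of A away from D. Let β : R → R[t₁, t₁⁻¹, t₂, t₂⁻¹, u] be the ℤ-algebra homomorphism induced by the substitution x₁₁ ↦ t₁x₁₁ + u x₂₁, x₁₂ ↦ t₁x₁₂ + u x₂₂, x₂₁ ↦ t₂x₂₁, x₂₂ ↦ t₂x₂₂. If p, q are integers with p ≤ q, then the ℤ-module M = { f ∈ R : β(f) = t₁^p t₂^q f } is free of rank q - p + 1, with basis the elements D^p · x₂₁^i · x₂₂^{q-p-i} for 0 ≤ i ≤ q - p. -/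
open MvPolynomial

noncomputable section

/-- `A = ℤ[x₁₁,x₁₂,x₂₁,x₂₂]`, with the variable `(i,j)` standing for `x_{i+1,j+1}`. -/
abbrev A : Type := MvPolynomial (Fin 2 × Fin 2) ℤ

/-- The coordinate `x_{i+1,j+1}`. -/
def Xv (i j : Fin 2) : A := X (i, j)

/-- The determinant `D = x₁₁x₂₂ - x₁₂x₂₁`. -/
def Dpoly : A := Xv 0 0 * Xv 1 1 - Xv 0 1 * Xv 1 0

/-- `R = A[1/D]`, the affine algebra of `GL₂/ℤ`. -/
abbrev R : Type := Localization.Away Dpoly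

/-- `S = R[t₁,t₁⁻¹,t₂,t₂⁻¹,u]`, realized as `R[t₁,t₂,u]` localized away from `t₁t₂`;
here `t₁ = X 0`, `t₂ = X 1`, `u = X 2`. -/
abbrev S : Type := Localization.Away ((X 0 * X 1 : MvPolynomial (Fin 3) R))

/-- The image of the coordinate `x_{i+1,j+1}` in `S`. -/
def xS (i j : Fin 2) : S := algebraMap R S (algebraMap A R (Xv i j))

/-- The element `t₁` of `S`. -/
def t1 : S := algebraMap (MvPolynomial (Fin 3) R) S (X 0)

/-- The element `t₂` of `S`. -/
def t2 : S := algebraMap (MvPolynomial (Fin 3) R) S (X 1)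

/-- The element `u` of `S`. -/
def uS : S := algebraMap (MvPolynomial (Fin 3) R) S (X 2)

/-- The substitution `X ↦ bX` with `b = [[t₁,u],[0,t₂]]` on the level of coordinates:
`x₁₁ ↦ t₁x₁₁ + u x₂₁`, `x₁₂ ↦ t₁x₁₂ + u x₂₂`, `x₂₁ ↦ t₂x₂₁`, `x₂₂ ↦ t₂x₂₂`. -/
def substVal (v : Fin 2 × Fin 2) : S :=
  if v = (0, 0) then t1 * xS 0 0 + uS * xS 1 0
  else if v = (0, 1) then t1 * xS 0 1 + uS * xS 1 1
  else if v = (1, 0) then t2 * xS 1 0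
  else t2 * xS 1 1

/-! A semi-invariant `a` of weight `t₁^i t₂^j` is determined by its values on matrices with first
row `(1, 0)`: multiplying the generic matrix by `[[x₂₂, -x₁₂], [0, 1]]` gives
`[[D, 0], [x₂₁, x₂₂]]`, whence `x₂₂^i a = D^i c(x₂₁, x₂₂)` with `c(y, z) = a([[1, 0], [y, z]])`.
Setting the first row to `(0, 1)` shows that `z^i` divides `y^i c`, hence `c = z^i h`, so
`a = D^i h(x₂₁, x₂₂)`; scaling the second row by `t₂` shows that `h` is homogeneous of degree
`j - i`. An arbitrary weight vector becomes such an `a` after multiplication by a power of `D`,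
which has weight `t₁t₂`. -/

section Homogeneous

variable {σ k : Type*} [CommSemiring k]

theorem aeval_mul_of_isHomogeneous {B : Type*} [CommSemiring B] [Algebra k B] {φ : MvPolynomial σ k}
    {n : ℕ} (hφ : φ.IsHomogeneous n) (c : B) (y : σ → B) :
    aeval (fun s => c * y s) φ = c ^ n * aeval y φ := by
  simp only [aeval_def, eval₂_eq, Finset.mul_sum]
  refine Finset.sum_congr rfl fun d hd => ?_
  have hd_degree : ∑ s ∈ d.support, d s = n := (hφ.degree_eq_sum_deg_support hd).symm
  rw [← hd_degree, ← Finset.prod_pow_eq_pow_sum]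
  simp only [mul_pow, Finset.prod_mul_distrib]
  ring

theorem aeval_C_X (φ : MvPolynomial σ k) :
    aeval (fun s => Polynomial.C (X s : MvPolynomial σ k)) φ = Polynomial.C φ := by
  simpa [Function.comp_def] using
    (comp_aeval_apply X (Polynomial.CAlgHom : MvPolynomial σ k →ₐ[k] _) φ).symm

theorem coeff_aeval_X_mul_C_X (φ : MvPolynomial σ k) (n : ℕ) :
    (aeval (fun s => Polynomial.X * Polynomial.C (X s)) φ :
      Polynomial (MvPolynomial σ k)).coeff n = homogeneousComponent n φ := by
  induction φ using MvPolynomial.induction_on' with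
  | add φ ψ hφ hψ => simp only [map_add, Polynomial.coeff_add, hφ, hψ]
  | monomial d c =>
    rw [aeval_mul_of_isHomogeneous (isHomogeneous_monomial c rfl), aeval_C_X, mul_comm,
      Polynomial.coeff_C_mul_X_pow, homogeneousComponent_of_mem (isHomogeneous_monomial c rfl)]

theorem isHomogeneous_of_aeval_X_mul_C_X {φ : MvPolynomial σ k} {n : ℕ}
    (h : aeval (fun s => Polynomial.X * Polynomial.C (X s : MvPolynomial σ k)) φ =
      Polynomial.X ^ n * Polynomial.C φ) :
    φ.IsHomogeneous n := by
  have hcoeff := coeff_aeval_X_mul_C_X φ n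
  rw [h, mul_comm, Polynomial.coeff_C_mul_X_pow, if_pos rfl] at hcoeff
  rw [hcoeff]
  exact homogeneousComponent_isHomogeneous n φ

theorem isHomogeneous_of_X_pow_mul {φ : MvPolynomial σ k} {s : σ} {m n : ℕ}
    (h : (X s ^ m * φ).IsHomogeneous (m + n)) : φ.IsHomogeneous n := by
  intro d hd
  have hcoeff : coeff (Finsupp.single s m + d) (X s ^ m * φ) ≠ 0 := by
    rwa [X_pow_eq_monomial, coeff_monomial_mul, one_mul]
  simpa [Finsupp.weight_single] using h hcoeff

end Homogeneous

section BinaryForms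

variable (k : Type*) [CommSemiring k] (n : ℕ)

/-- The exponent of the monomial `y^i z^(n-i)` in two variables. -/
def binaryExponent (i : Fin (n + 1)) : Fin 2 →₀ ℕ :=
  Finsupp.single 0 (i : ℕ) + Finsupp.single 1 (n - i)

/-- The monomial `y^i z^(n-i)` of degree `n` in two variables. -/
def binaryMonomial (i : Fin (n + 1)) : MvPolynomial (Fin 2) k :=
  X 0 ^ (i : ℕ) * X 1 ^ (n - i)

theorem binaryExponent_injective : Function.Injective (binaryExponent n) := by
  intro i j hij
  simpa [binaryExponent, Fin.ext_iff] using DFunLike.congr_fun hij 0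

theorem range_binaryExponent : Set.range (binaryExponent n) = {d | d.degree = n} := by
  ext d
  simp only [Set.mem_range, Set.mem_ofPred_eq, Finsupp.degree_eq_sum, Fin.sum_univ_two]
  refine ⟨?_, fun hd => ⟨⟨d 0, by omega⟩, ?_⟩⟩
  · rintro ⟨i, rfl⟩
    simpa [binaryExponent] using Nat.add_sub_cancel' i.is_le
  · ext j
    fin_cases j
    · simp [binaryExponent]
    · simpa [binaryExponent] using Nat.sub_eq_of_eq_add' hd.symm

theorem binaryMonomial_eq_basisMonomials_comp :
    binaryMonomial k n = basisMonomials (Fin 2) k ∘ binaryExponent n := by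
  funext i
  simp [binaryMonomial, binaryExponent, X_pow_eq_monomial, monomial_mul]

theorem linearIndependent_binaryMonomial : LinearIndependent k (binaryMonomial k n) := by
  rw [binaryMonomial_eq_basisMonomials_comp]
  exact (basisMonomials (Fin 2) k).linearIndependent.comp _ (binaryExponent_injective n)

theorem span_range_binaryMonomial :
    Submodule.span k (Set.range (binaryMonomial k n)) = homogeneousSubmodule (Fin 2) k n := by
  rw [binaryMonomial_eq_basisMonomials_comp, Set.range_comp, range_binaryExponent,
    homogeneousSubmodule_eq_finsupp_supported, AddMonoidAlgebra.supported_eq_span_single]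
  rfl

end BinaryForms

open Matrix

section MatrixEval

variable {m n k B C : Type*} [CommRing k] [CommRing B] [Algebra k B] [CommRing C] [Algebra k C]

/-- The value at a matrix `M` of a polynomial function of the matrix entries. -/
def matrixEval (M : Matrix m n B) : MvPolynomial (m × n) k →ₐ[k] B :=
  aeval fun v => M v.1 v.2

@[simp]
theorem matrixEval_X (M : Matrix m n B) (i : m) (j : n) :
    matrixEval M (X (i, j) : MvPolynomial (m × n) k) = M i j :=
  aeval_X ..

theorem map_matrixEval (f : B →ₐ[k] C) (M : Matrix m n B) (a : MvPolynomial (m × n) k) :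
    f (matrixEval M a) = matrixEval (M.map f) a :=
  comp_aeval_apply ..

theorem matrixEval_mvPolynomialX (a : MvPolynomial (m × n) k) :
    matrixEval (mvPolynomialX m n k) a = a :=
  aeval_X_left_apply a

theorem matrixEval_mvPolynomialX_map (f : MvPolynomial (m × n) k →ₐ[k] B)
    (a : MvPolynomial (m × n) k) : matrixEval ((mvPolynomialX m n k).map f) a = f a := by
  rw [← map_matrixEval, matrixEval_mvPolynomialX]

theorem matrixEval_det [Fintype n] [DecidableEq n] (M : Matrix n n B) :
    matrixEval M (mvPolynomialX n n k).det = M.det := by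
  rw [AlgHom.map_det]
  exact congrArg det (mvPolynomialX_mapMatrix_aeval k M)

theorem matrixEval_rename (M : Matrix m n B) (i : m) (h : MvPolynomial n k) :
    matrixEval M (rename (Prod.mk i) h) = aeval (M i) h :=
  aeval_rename ..

end MatrixEval

/-- The upper triangular matrix with diagonal `(s, t)` and upper right entry `u`. -/
def borelMatrix {B : Type*} [Zero B] (s t u : B) : Matrix (Fin 2) (Fin 2) B :=
  !![s, u; 0, t]

section SemiInvariant

variable {k : Type*} [CommRing k] {i j : ℕ} {a : MvPolynomial (Fin 2 × Fin 2) k}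

/-- The polynomial function `a` on `2 × 2` matrices satisfies `a(bg) = t₁^i t₂^j a(g)` for upper
triangular `b` with diagonal `(t₁, t₂)`, expressed for generic `g` and `b` with entries
`t₁ = X 0`, `t₂ = X 1`, `u = X 2`. -/
def IsBorelSemiInvariant (i j : ℕ) (a : MvPolynomial (Fin 2 × Fin 2) k) : Prop :=
  matrixEval (borelMatrix (X 0) (X 1) (X 2) * (mvPolynomialX (Fin 2) (Fin 2) k).map C) a =
    (X 0 ^ i * X 1 ^ j * C a : MvPolynomial (Fin 3) (MvPolynomial (Fin 2 × Fin 2) k))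

theorem map_borelMatrix_mul {B C F : Type*} [CommRing B] [CommRing C] [FunLike F B C]
    [RingHomClass F B C] (f : F) (s t u : B) (M : Matrix (Fin 2) (Fin 2) B) :
    (borelMatrix s t u * M).map f = borelMatrix (f s) (f t) (f u) * M.map f := by
  ext x y
  fin_cases x <;> simp [borelMatrix, Matrix.vecMul, dotProduct, Fin.sum_univ_two]

theorem det_borelMatrix {B : Type*} [CommRing B] (s t u : B) : (borelMatrix s t u).det = s * t := by
  simp [borelMatrix, det_fin_two]

theorem borelMatrix_mul_apply_one {B : Type*} [CommRing B] (s t u : B)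
    (M : Matrix (Fin 2) (Fin 2) B) : (borelMatrix s t u * M) 1 = fun y => t * M 1 y := by
  funext y
  simp [borelMatrix, Matrix.mul_apply, Fin.sum_univ_two]

theorem IsBorelSemiInvariant.matrixEval_borelMatrix_mul (ha : IsBorelSemiInvariant i j a)
    {B : Type*} [CommRing B] [Algebra k B] (s t u : B) (M : Matrix (Fin 2) (Fin 2) B) :
    matrixEval (borelMatrix s t u * M) a = s ^ i * t ^ j * matrixEval M a := by
  let specialize : MvPolynomial (Fin 3) (MvPolynomial (Fin 2 × Fin 2) k) →ₐ[k] B :=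
    aevalTower (matrixEval M) ![s, t, u]
  have hM : ((mvPolynomialX (Fin 2) (Fin 2) k).map C).map specialize = M := by
    ext x y
    simp [specialize]
  have h := congrArg specialize ha
  rw [map_matrixEval, map_borelMatrix_mul, hM] at h
  simpa [specialize] using h

theorem isBorelSemiInvariant_iff_of_injective {E : Type*} [CommRing E] [Algebra k E]
    {f : MvPolynomial (Fin 3) (MvPolynomial (Fin 2 × Fin 2) k) →ₐ[k] E}
    (hf : Function.Injective f) :
    IsBorelSemiInvariant i j a ↔
      matrixEval (borelMatrix (f (X 0)) (f (X 1)) (f (X 2)) *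
        (mvPolynomialX (Fin 2) (Fin 2) k).map (f ∘ C)) a =
          f (X 0) ^ i * f (X 1) ^ j * f (C a) := by
  rw [IsBorelSemiInvariant, ← hf.eq_iff, map_matrixEval, map_borelMatrix_mul]
  simp

theorem isBorelSemiInvariant_det :
    IsBorelSemiInvariant 1 1 (mvPolynomialX (Fin 2) (Fin 2) k).det := by
  rw [IsBorelSemiInvariant, matrixEval_det, det_mul, det_borelMatrix, pow_one, pow_one,
    RingHom.map_det]
  rfl

theorem isBorelSemiInvariant_rename {n : ℕ} {h : MvPolynomial (Fin 2) k}
    (hh : h.IsHomogeneous n) : IsBorelSemiInvariant 0 n (rename (Prod.mk (1 : Fin 2)) h) := by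
  let toC : MvPolynomial (Fin 2 × Fin 2) k →ₐ[k]
      MvPolynomial (Fin 3) (MvPolynomial (Fin 2 × Fin 2) k) := Algebra.algHom _ _ _
  have hC : C (rename (Prod.mk (1 : Fin 2)) h) = toC (rename (Prod.mk (1 : Fin 2)) h) := rfl
  rw [IsBorelSemiInvariant, matrixEval_rename, borelMatrix_mul_apply_one,
    aeval_mul_of_isHomogeneous hh, pow_zero, one_mul, hC, ← matrixEval_mvPolynomialX_map toC,
    matrixEval_rename]
  rfl

/-- The polynomial `c(y, z) = a([[1, 0], [y, z]])`, with `y = X 0` and `z = X 1`. -/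
def rowRestriction : MvPolynomial (Fin 2 × Fin 2) k →ₐ[k] MvPolynomial (Fin 2) k :=
  matrixEval !![1, 0; X 0, X 1]

theorem aeval_rowRestriction {B : Type*} [CommRing B] [Algebra k B] (y : Fin 2 → B)
    (a : MvPolynomial (Fin 2 × Fin 2) k) :
    aeval y (rowRestriction a) = matrixEval !![1, 0; y 0, y 1] a := by
  have hM : (!![1, 0; X 0, X 1] : Matrix _ _ (MvPolynomial (Fin 2) k)).map (aeval y) =
      !![1, 0; y 0, y 1] := by
    ext r c
    fin_cases r <;> fin_cases c <;> simp
  rw [rowRestriction, map_matrixEval, hM]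

namespace IsBorelSemiInvariant

theorem pow_mul_matrixEval (ha : IsBorelSemiInvariant i j a) {B : Type*} [CommRing B] [Algebra k B]
    (M : Matrix (Fin 2) (Fin 2) B) :
    M 1 1 ^ i * matrixEval M a = M.det ^ i * aeval (M 1) (rowRestriction a) := by
  have hmatrix : borelMatrix (M 1 1) 1 (-M 0 1) * M =
      borelMatrix M.det 1 0 * !![1, 0; M 1 0, M 1 1] := by
    ext r c
    fin_cases r <;> fin_cases c <;>
      simp [borelMatrix, Matrix.mul_apply, Fin.sum_univ_two, det_fin_two] <;> ring
  simpa [ha.matrixEval_borelMatrix_mul, aeval_rowRestriction] using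
    congrArg (matrixEval · a) hmatrix

theorem isHomogeneous_rowRestriction (ha : IsBorelSemiInvariant i j a) :
    (rowRestriction a).IsHomogeneous j := by
  apply isHomogeneous_of_aeval_X_mul_C_X
  have hmatrix : !![1, 0; .X * .C (X 0), .X * .C (X 1)] =
      borelMatrix (1 : Polynomial (MvPolynomial (Fin 2) k)) .X 0 *
        !![1, 0; .C (X 0), .C (X 1)] := by
    simp [borelMatrix]
  have hC := aeval_rowRestriction (fun s => Polynomial.C (X s : MvPolynomial (Fin 2) k)) a
  rw [aeval_C_X] at hC
  rw [aeval_rowRestriction, hmatrix, ha.matrixEval_borelMatrix_mul, one_pow, one_mul, hC]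

theorem X_pow_dvd_rowRestriction [IsDomain k] (ha : IsBorelSemiInvariant i j a) :
    X 1 ^ i ∣ rowRestriction a := by
  have hX : ¬ (X 1 : MvPolynomial (Fin 2) k) ∣ (-X 0) ^ i := fun hX => by
    simpa [X_dvd_X] using X_prime.dvd_of_dvd_pow hX
  let M : Matrix (Fin 2) (Fin 2) (MvPolynomial (Fin 2) k) := Matrix.of ![![0, 1], X]
  have hM : X 1 ^ i * matrixEval M a = (-X 0) ^ i * rowRestriction a := by
    have hdet : M.det = -X 0 := by simp [M, det_fin_two]
    rw [← hdet, ← aeval_X_left_apply (rowRestriction a)]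
    exact ha.pow_mul_matrixEval M
  exact X_prime.pow_dvd_of_dvd_mul_left i hX ⟨matrixEval M a, hM.symm⟩

theorem exists_eq_det_pow_mul_rename [IsDomain k] {n : ℕ} (ha : IsBorelSemiInvariant i (i + n) a) :
    ∃ h : MvPolynomial (Fin 2) k, h.IsHomogeneous n ∧
      a = (mvPolynomialX (Fin 2) (Fin 2) k).det ^ i * rename (Prod.mk 1) h := by
  obtain ⟨h, hh⟩ := ha.X_pow_dvd_rowRestriction
  refine ⟨h, isHomogeneous_of_X_pow_mul (s := 1) (m := i) ?_, ?_⟩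
  · rw [← hh]
    exact ha.isHomogeneous_rowRestriction
  have hX : (X (1, 1) : MvPolynomial (Fin 2 × Fin 2) k) ^ i ≠ 0 := pow_ne_zero i (X_ne_zero _)
  apply mul_left_cancel₀ hX
  have hgeneric := ha.pow_mul_matrixEval (mvPolynomialX (Fin 2) (Fin 2) k)
  rw [← matrixEval_rename, matrixEval_mvPolynomialX, matrixEval_mvPolynomialX,
    mvPolynomialX_apply, hh, map_mul, map_pow, rename_X] at hgeneric
  rw [hgeneric]
  ring

end IsBorelSemiInvariant

end SemiInvariant

section WeightVector

variable {O E : Type*} [CommRing O] [CommRing E] {β ι : O →+* E} {χ ψ : Eˣ}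

/-- The element `f` transforms under `β` through the character `χ`: `β f = χ f`, where `f` is
regarded as an element of `E` through `ι`. -/
def IsWeightVector (β ι : O →+* E) (χ : Eˣ) (f : O) : Prop :=
  β f = χ * ι f

theorem IsWeightVector.units_zpow {v : Oˣ} (hv : IsWeightVector β ι χ v) (r : ℤ) :
    IsWeightVector β ι (χ ^ r) ((v ^ r : Oˣ) : O) := by
  have hunits : Units.map (β : O →* E) v = χ * Units.map (ι : O →* E) v := Units.ext hv
  have hzpow := congrArg (· ^ r) hunits
  simp only [mul_zpow, ← map_zpow] at hzpow
  exact congrArg Units.val hzpow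

theorem IsWeightVector.units_mul_iff {v : Oˣ} (hv : IsWeightVector β ι χ v) {f : O} :
    IsWeightVector β ι (χ * ψ) (v * f) ↔ IsWeightVector β ι ψ f := by
  have hunit : IsUnit ((χ : E) * ι v) := χ.isUnit.mul (v.isUnit.map ι)
  rw [IsWeightVector, IsWeightVector, map_mul, hv, map_mul, Units.val_mul, mul_mul_mul_comm,
    hunit.mul_right_inj]

end WeightVector

theorem faithfulSMul_of_isLocalization_away {D E : Type*} [CommRing D] [IsDomain D] [CommRing E]
    [Algebra D E] {d : D} [IsLocalization.Away d E] (hd : d ≠ 0) : FaithfulSMul D E :=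
  (faithfulSMul_iff_algebraMap_injective D E).2 <|
    IsLocalization.injective E (powers_le_nonZeroDivisors_of_noZeroDivisors hd)

section GL2

variable {k O E : Type*} [CommRing k]
  [CommRing O] [Algebra (MvPolynomial (Fin 2 × Fin 2) k) O]
  [Algebra k O] [IsScalarTower k (MvPolynomial (Fin 2 × Fin 2) k) O]

/-- The `k`-linear map sending a binary form `h` to the function `v h(x₂₁, x₂₂)`. -/
def rowForm (v : Oˣ) : MvPolynomial (Fin 2) k →ₗ[k] O :=
  LinearMap.mulLeft k (v : O) ∘ₗ
    ((IsScalarTower.toAlgHom k (MvPolynomial (Fin 2 × Fin 2) k) O).comp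
      (rename (Prod.mk (1 : Fin 2)))).toLinearMap

theorem rowForm_apply (v : Oˣ) (h : MvPolynomial (Fin 2) k) :
    rowForm v h =
      v * algebraMap (MvPolynomial (Fin 2 × Fin 2) k) O (rename (Prod.mk (1 : Fin 2)) h) :=
  rfl

theorem rowForm_binaryMonomial (v : Oˣ) (n : ℕ) (i : Fin (n + 1)) :
    rowForm v (binaryMonomial k n i) = v * algebraMap (MvPolynomial (Fin 2 × Fin 2) k) O
      (X (1, 0) ^ (i : ℕ) * X (1, 1) ^ (n - (i : ℕ))) := by
  simp [rowForm_apply, binaryMonomial]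

theorem rowForm_injective [FaithfulSMul (MvPolynomial (Fin 2 × Fin 2) k) O] (v : Oˣ) :
    Function.Injective (rowForm (k := k) v) :=
  v.isUnit.mul_right_injective.comp <| (FaithfulSMul.algebraMap_injective _ O).comp <|
    rename_injective _ (Prod.mk_right_injective 1)

variable [CommRing E] [Algebra (MvPolynomial (Fin 3) O) E] [Algebra O E]
  [IsScalarTower O (MvPolynomial (Fin 3) O) E] [Algebra k E] [IsScalarTower k O E]

/-- The comorphism `β` of the left action `(b, g) ↦ bg` of upper triangular matrices on `GL₂`, where
`O = k[GL₂]` and `b` has entries `t₁ = X 0`, `t₂ = X 1` and `u = X 2` in `E`. -/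
def IsBorelCoaction (k : Type*) {O E : Type*} [CommRing k] [CommRing O]
    [Algebra (MvPolynomial (Fin 2 × Fin 2) k) O] [CommRing E] [Algebra (MvPolynomial (Fin 3) O) E]
    [Algebra O E] [Algebra k E] (β : O →+* E) : Prop :=
  let T := algebraMap (MvPolynomial (Fin 3) O) E
  let g := (mvPolynomialX (Fin 2) (Fin 2) k).map fun a => algebraMap O E (algebraMap _ O a)
  ∀ a : MvPolynomial (Fin 2 × Fin 2) k, β (algebraMap _ O a) =
    matrixEval (borelMatrix (T (X 0)) (T (X 1)) (T (X 2)) * g) a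

variable [FaithfulSMul (MvPolynomial (Fin 3) O) E] {β : O →+* E} {u₁ u₂ : Eˣ} {v : Oˣ}

theorem IsBorelCoaction.isWeightVector_algebraMap_iff
    [FaithfulSMul (MvPolynomial (Fin 2 × Fin 2) k) O] (hβ : IsBorelCoaction k β)
    (hu₁ : (u₁ : E) = algebraMap (MvPolynomial (Fin 3) O) E (X 0))
    (hu₂ : (u₂ : E) = algebraMap (MvPolynomial (Fin 3) O) E (X 1))
    {a : MvPolynomial (Fin 2 × Fin 2) k} {i j : ℕ} :
    IsWeightVector β (algebraMap O E) (u₁ ^ i * u₂ ^ j) (algebraMap _ O a) ↔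
      IsBorelSemiInvariant i j a := by
  have : IsScalarTower k (MvPolynomial (Fin 3) O) E := .to₁₃₄ k O _ E
  let f : MvPolynomial (Fin 3) (MvPolynomial (Fin 2 × Fin 2) k) →ₐ[k] E :=
    (IsScalarTower.toAlgHom k (MvPolynomial (Fin 3) O) E).comp
      (mapAlgHom (IsScalarTower.toAlgHom k (MvPolynomial (Fin 2 × Fin 2) k) O))
  have hf : Function.Injective f :=
    (FaithfulSMul.algebraMap_injective _ E).comp
      (map_injective _ (FaithfulSMul.algebraMap_injective _ O))
  have hfX (s : Fin 3) : f (X s) = algebraMap (MvPolynomial (Fin 3) O) E (X s) := by simp [f]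
  have hfC (a : MvPolynomial (Fin 2 × Fin 2) k) :
      f (C a) = algebraMap O E (algebraMap _ O a) := by
    simp [f, IsScalarTower.algebraMap_apply O (MvPolynomial (Fin 3) O) E]
  rw [isBorelSemiInvariant_iff_of_injective hf, IsWeightVector, hβ]
  simp [Function.comp_def, hfX, hfC, hu₁, hu₂]

theorem IsBorelCoaction.isWeightVector_unit_det [FaithfulSMul (MvPolynomial (Fin 2 × Fin 2) k) O]
    (hβ : IsBorelCoaction k β)
    (hu₁ : (u₁ : E) = algebraMap (MvPolynomial (Fin 3) O) E (X 0))
    (hu₂ : (u₂ : E) = algebraMap (MvPolynomial (Fin 3) O) E (X 1))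
    (hv : (v : O) = algebraMap _ O (mvPolynomialX (Fin 2) (Fin 2) k).det) :
    IsWeightVector β (algebraMap O E) (u₁ * u₂) v := by
  simpa [hv] using (hβ.isWeightVector_algebraMap_iff hu₁ hu₂).2 isBorelSemiInvariant_det

variable [IsDomain k] [IsLocalization.Away (mvPolynomialX (Fin 2) (Fin 2) k).det O] {n : ℕ}

theorem IsBorelCoaction.isWeightVector_pow_iff (hβ : IsBorelCoaction k β)
    (hu₁ : (u₁ : E) = algebraMap (MvPolynomial (Fin 3) O) E (X 0))
    (hu₂ : (u₂ : E) = algebraMap (MvPolynomial (Fin 3) O) E (X 1))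
    (hv : (v : O) = algebraMap _ O (mvPolynomialX (Fin 2) (Fin 2) k).det) {g : O} :
    IsWeightVector β (algebraMap O E) (u₂ ^ n) g ↔
      ∃ h ∈ homogeneousSubmodule (Fin 2) k n, rowForm 1 h = g := by
  have := faithfulSMul_of_isLocalization_away (E := O) (det_mvPolynomialX_ne_zero (Fin 2) k)
  constructor
  · intro hg
    obtain ⟨i, a, hga⟩ := IsLocalization.Away.surj (mvPolynomialX (Fin 2) (Fin 2) k).det g
    rw [← hv] at hga
    have ha : IsBorelSemiInvariant i (i + n) a := by
      rw [← hβ.isWeightVector_algebraMap_iff hu₁ hu₂, ← hga, mul_comm g, pow_add, ← mul_assoc,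
        ← mul_pow]
      simpa using ((hβ.isWeightVector_unit_det hu₁ hu₂ hv).units_zpow i).units_mul_iff.2 hg
    obtain ⟨h, hh, rfl⟩ := ha.exists_eq_det_pow_mul_rename
    refine ⟨h, hh, (v.isUnit.pow i).mul_right_cancel ?_⟩
    rw [hga, rowForm_apply, map_mul, map_pow, hv, Units.val_one, one_mul, mul_comm]
  · rintro ⟨h, hh, rfl⟩
    simpa [rowForm_apply] using
      (hβ.isWeightVector_algebraMap_iff hu₁ hu₂).2 (isBorelSemiInvariant_rename hh)

theorem IsBorelCoaction.isWeightVector_zpow_iff (hβ : IsBorelCoaction k β)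
    (hu₁ : (u₁ : E) = algebraMap (MvPolynomial (Fin 3) O) E (X 0))
    (hu₂ : (u₂ : E) = algebraMap (MvPolynomial (Fin 3) O) E (X 1))
    (hv : (v : O) = algebraMap _ O (mvPolynomialX (Fin 2) (Fin 2) k).det)
    {p q : ℤ} (hq : q = p + n) {f : O} :
    IsWeightVector β (algebraMap O E) (u₁ ^ p * u₂ ^ q) f ↔
      f ∈ (homogeneousSubmodule (Fin 2) k n).map (rowForm (v ^ p)) := by
  have := faithfulSMul_of_isLocalization_away (E := O) (det_mvPolynomialX_ne_zero (Fin 2) k)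
  have hvp := (hβ.isWeightVector_unit_det hu₁ hu₂ hv).units_zpow p
  obtain ⟨g, rfl⟩ : ∃ g, f = ((v ^ p : Oˣ) : O) * g := ⟨_, (Units.mul_inv_cancel_left _ f).symm⟩
  have hχ : u₁ ^ p * u₂ ^ q = (u₁ * u₂) ^ p * u₂ ^ n := by
    rw [hq, _root_.zpow_add, zpow_natCast, mul_zpow, mul_assoc]
  rw [hχ, hvp.units_mul_iff, hβ.isWeightVector_pow_iff hu₁ hu₂ hv, Submodule.mem_map]
  simp [rowForm_apply]

theorem stmt_9_general (hβ : IsBorelCoaction k β)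
    (hu₁ : (u₁ : E) = algebraMap (MvPolynomial (Fin 3) O) E (X 0))
    (hu₂ : (u₂ : E) = algebraMap (MvPolynomial (Fin 3) O) E (X 1))
    (hv : (v : O) = algebraMap _ O (mvPolynomialX (Fin 2) (Fin 2) k).det)
    {p q : ℤ} (hq : q = p + n) {e : Fin (n + 1) → O}
    (he : ∀ i, e i = ((v ^ p : Oˣ) : O) * algebraMap (MvPolynomial (Fin 2 × Fin 2) k) O
      (X (1, 0) ^ (i : ℕ) * X (1, 1) ^ (n - (i : ℕ)))) :
    LinearIndependent k e ∧ ∀ f : O,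
      f ∈ Submodule.span k (Set.range e) ↔
        β f = ((u₁ ^ p * u₂ ^ q : Eˣ) : E) * algebraMap O E f := by
  have := faithfulSMul_of_isLocalization_away (E := O) (det_mvPolynomialX_ne_zero (Fin 2) k)
  have he_rowForm : e = rowForm (v ^ p) ∘ binaryMonomial k n :=
    funext fun i => by rw [he, Function.comp_apply, rowForm_binaryMonomial]
  have hspan : Submodule.span k (Set.range e) =
      (homogeneousSubmodule (Fin 2) k n).map (rowForm (v ^ p)) := by
    rw [he_rowForm, Set.range_comp, ← Submodule.map_span, span_range_binaryMonomial]
  refine ⟨?_, fun f => ?_⟩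
  · rw [he_rowForm]
    exact (linearIndependent_binaryMonomial k n).map' _
      (LinearMap.ker_eq_bot.2 (rowForm_injective _))
  · rw [hspan]
    exact (hβ.isWeightVector_zpow_iff hu₁ hu₂ hv hq).symm

end GL2

theorem Dpoly_eq_det : Dpoly = (mvPolynomialX (Fin 2) (Fin 2) ℤ).det := by
  rw [det_fin_two]
  rfl

instance isLocalizationAway_det_R :
    IsLocalization.Away (mvPolynomialX (Fin 2) (Fin 2) ℤ).det R := by
  rw [← Dpoly_eq_det]
  infer_instance

instance isDomain_R : IsDomain R :=
  IsLocalization.isDomain_localization <| powers_le_nonZeroDivisors_of_noZeroDivisors <|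
    Dpoly_eq_det ▸ det_mvPolynomialX_ne_zero (Fin 2) ℤ

instance faithfulSMul_S : @FaithfulSMul (MvPolynomial (Fin 3) R) S Algebra.toSMul :=
  faithfulSMul_of_isLocalization_away (mul_ne_zero (X_ne_zero 0) (X_ne_zero 1))

theorem substVal_eq_borelMatrix_mul (w : Fin 2 × Fin 2) :
    substVal w = (borelMatrix t1 t2 uS * Matrix.of xS) w.1 w.2 := by
  obtain ⟨r, c⟩ := w
  fin_cases r <;> fin_cases c <;>
    simp [substVal, borelMatrix, Matrix.mul_apply, Fin.sum_univ_two]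

theorem isBorelCoaction_of_aeval_substVal {β : R →+* S}
    (hβ : ∀ a : A, β (algebraMap A R a) = aeval substVal a) : IsBorelCoaction ℤ β := by
  rw [funext substVal_eq_borelMatrix_mul] at hβ
  exact hβ

/-- If `p ≤ q` then the ℤ-module `M = { f ∈ R : β(f) = t₁^p t₂^q f }` is free of rank
`q - p + 1`, with basis the elements `D^p · x₂₁^i · x₂₂^{q-p-i}` for `0 ≤ i ≤ q-p`
(the module `A_λ(B\GL₂)` realizes the highest weight module `M_{λ⁻,ℤ}` for `l ≤ 0`). -/
theorem stmt_9 (β : R →+* S)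
    (hβ : ∀ a : A, β (algebraMap A R a) = aeval substVal a)
    (u1 u2 : Sˣ) (hu1 : (u1 : S) = t1) (hu2 : (u2 : S) = t2)
    (uD : Rˣ) (huD : (uD : R) = algebraMap A R Dpoly)
    (p q : ℤ) (hpq : p ≤ q)
    (e : Fin ((q - p).toNat + 1) → R)
    (he : ∀ i, e i = ((uD ^ p : Rˣ) : R) *
      algebraMap A R (Xv 1 0 ^ (i : ℕ) * Xv 1 1 ^ ((q - p).toNat - (i : ℕ)))) :
    (∀ i, β (e i) = ((u1 ^ p * u2 ^ q : Sˣ) : S) * algebraMap R S (e i)) ∧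
    LinearIndependent ℤ e ∧
    (∀ f : R, β f = ((u1 ^ p * u2 ^ q : Sˣ) : S) * algebraMap R S f →
      f ∈ Submodule.span ℤ (Set.range e)) := by
  obtain ⟨hindep, hspan⟩ := stmt_9_general (isBorelCoaction_of_aeval_substVal hβ) hu1 hu2
    (huD.trans (congrArg _ Dpoly_eq_det)) (by omega : q = p + (q - p).toNat) he
  rw [Subsingleton.elim (Algebra.toModule : Module ℤ R) (AddCommGroup.toIntModule R)]
    at hindep hspan
  exact ⟨fun i => (hspan _).1 (Submodule.subset_span ⟨i, rfl⟩), hindep, fun f => (hspan f).2⟩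
end
end
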